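/- Let E be a fundamental set of type (M,n) with n > M, and let P be its associated complex. Then P is a pseudo-manifold if and only if E is minimal for the SEU property. -/

import Mathlib

/-!
Complementation in `{0, …, n-1}` turns the facets of the associated complex into the members
of `E`, and its ridges into the sets of cardinality `M + 1` that contain a member of `E`.
In these terms condition (i) of a pseudo-manifold says that every set of cardinality `M + 1`
containing a member of `E` contains exactly two of them, and this is the SEU property
(`seu_iff`): the second member of `E` inside `P ∪ {k}` is the substitute `(P \ {k'}) ∪ {k}`.

Call two members of `E` adjacent when their union has cardinality `M + 1`; then condition (ii)
is connectedness of this adjacency graph. Given (i), a nonempty subfamily of `E` satisfies SEU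
exactly when it is a union of connected components: an SEU subfamily is closed under adjacency
(`mem_of_adjacent`), and a connected component inherits SEU (`seu_component`). Hence
minimality amounts to there being only one component.
-/

open Classical

/-- `E` is a fundamental set of type `(M, n)`: a nonempty family of subsets of the
ground set `{0, …, n-1}` (our encoding of `{1, …, n}`), each of cardinality `M`. -/
def IsFundamentalSet (M n : ℕ) (E : Finset (Finset ℕ)) : Prop :=
  E.Nonempty ∧ ∀ P ∈ E, P ⊆ Finset.range n ∧ P.card = M

/-- A subset of the ground set `{0, …, n-1}` is acceptable if it contains a member of `E`. -/
def Acceptable (E : Finset (Finset ℕ)) (A : Finset ℕ) : Prop :=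
  ∃ P ∈ E, P ⊆ A

/-- The associated complex of `E`: all subsets of the ground set `{0, …, n-1}` whose
complement in the ground set is acceptable. -/
def AssocComplex (n : ℕ) (E : Finset (Finset ℕ)) : Set (Finset ℕ) :=
  {σ | σ ⊆ Finset.range n ∧ Acceptable E (Finset.range n \ σ)}

/-- Facets: the maximal faces of the associated complex. -/
def IsFacet (n : ℕ) (E : Finset (Finset ℕ)) (σ : Finset ℕ) : Prop :=
  σ ∈ AssocComplex n E ∧ ∀ τ ∈ AssocComplex n E, σ ⊆ τ → τ = σ

/-- Facets (maximal faces) of an abstract simplicial complex given as a finite family. -/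
def IsFacetOf (P : Finset (Finset ℕ)) (σ : Finset ℕ) : Prop :=
  σ ∈ P ∧ ∀ τ ∈ P, σ ⊆ τ → τ = σ

/-- The SEU (Substitute's Existence and Uniqueness) property. -/
def SEU (n : ℕ) (E : Finset (Finset ℕ)) : Prop :=
  ∀ P ∈ E, ∀ k ∈ Finset.range n, ∃! k', k' ∈ P ∧ (P \ {k'}) ∪ {k} ∈ E

/-- `E` is minimal for the SEU property: it satisfies SEU and no proper nonempty
subfamily satisfies SEU. -/
def MinimalSEU (n : ℕ) (E : Finset (Finset ℕ)) : Prop :=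
  SEU n E ∧ ∀ E' : Finset (Finset ℕ), E' ⊂ E → E'.Nonempty → ¬ SEU n E'

/-- Ridges of the associated complex of a fundamental set of type `(M, n)`:
faces of cardinality `n - M - 1`. -/
def IsRidge (M n : ℕ) (E : Finset (Finset ℕ)) (Q : Finset ℕ) : Prop :=
  Q ∈ AssocComplex n E ∧ Q.card + 1 = n - M

/-- The associated complex of a fundamental set of type `(M, n)` is a pseudo-manifold:
(i) every ridge is contained in exactly two facets, and (ii) any two facets are joined
by a chain of facets in which consecutive facets intersect in a ridge. -/
def IsPseudoManifold (M n : ℕ) (E : Finset (Finset ℕ)) : Prop :=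
  (∀ Q, IsRidge M n E Q →
      ((Finset.range n).powerset.filter fun σ => IsFacet n E σ ∧ Q ⊆ σ).card = 2) ∧
  ∀ σ τ, IsFacet n E σ → IsFacet n E τ →
    ∃ r : ℕ, ∃ c : Fin (r + 1) → Finset ℕ, c 0 = σ ∧ c (Fin.last r) = τ ∧
      (∀ i, IsFacet n E (c i)) ∧
      ∀ i : Fin r, IsRidge M n E (c i.castSucc ∩ c i.succ)


/-! ### The pseudo-manifold conditions on complements -/

/-- Every set of cardinality `M + 1` in the ground set that contains a member of `E` contains
exactly two of them: condition (i) of a pseudo-manifold, read on complements. -/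
def TwoMembers (M n : ℕ) (E : Finset (Finset ℕ)) : Prop :=
  ∀ R ⊆ Finset.range n, R.card = M + 1 → (∃ P ∈ E, P ⊆ R) → (E.filter (· ⊆ R)).card = 2

/-- Two members of `E` whose union has cardinality `M + 1`; for families of `M`-sets this says
that their complements are facets meeting in a ridge. -/
def Adjacent (M : ℕ) (E : Finset (Finset ℕ)) (P Q : Finset ℕ) : Prop :=
  P ∈ E ∧ Q ∈ E ∧ (P ∪ Q).card = M + 1

/-! ### Facets and ridges as complements -/

theorem facet_iff {M n : ℕ} {E : Finset (Finset ℕ)} (hE : IsFundamentalSet M n E)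
    (σ : Finset ℕ) : IsFacet n E σ ↔ σ ⊆ Finset.range n ∧ Finset.range n \ σ ∈ E := by
  constructor
  · rintro ⟨⟨hσ, P, hP, hPσ⟩, hmax⟩
    refine ⟨hσ, ?_⟩
    have hPn := (hE.2 P hP).1
    -- The complement of `P` is a face containing `σ`, hence equal to `σ`.
    have h := hmax (Finset.range n \ P)
      ⟨Finset.sdiff_subset, P, hP, by rw [Finset.sdiff_sdiff_eq_self hPn]⟩
      (fun x hx => Finset.mem_sdiff.2 ⟨hσ hx, fun hxP => (Finset.mem_sdiff.1 (hPσ hxP)).2 hx⟩)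
    rw [← h, Finset.sdiff_sdiff_eq_self hPn]
    exact hP
  · rintro ⟨hσ, hP⟩
    refine ⟨⟨hσ, _, hP, subset_rfl⟩, ?_⟩
    rintro τ ⟨hτ, Q, hQ, hQτ⟩ hστ
    have h1 : Q ⊆ Finset.range n \ σ := hQτ.trans (Finset.sdiff_subset_sdiff subset_rfl hστ)
    have h2 : Q = Finset.range n \ σ :=
      Finset.eq_of_subset_of_card_le h1 (by rw [(hE.2 _ hP).2, (hE.2 _ hQ).2])
    refine Finset.Subset.antisymm (fun x hx => ?_) hστ
    by_contra hxσ
    have : x ∈ Q := h2 ▸ Finset.mem_sdiff.2 ⟨hτ hx, hxσ⟩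
    exact (Finset.mem_sdiff.1 (hQτ this)).2 hx

theorem ridge_iff {M n : ℕ} {E : Finset (Finset ℕ)} (hMn : M < n) (Q : Finset ℕ) :
    IsRidge M n E Q ↔ Q ⊆ Finset.range n ∧ (Finset.range n \ Q).card = M + 1 ∧
      ∃ P ∈ E, P ⊆ Finset.range n \ Q := by
  have key : Q ⊆ Finset.range n → (Q.card + 1 = n - M ↔ (Finset.range n \ Q).card = M + 1) := by
    intro h
    have h1 := Finset.card_le_card h
    rw [Finset.card_sdiff_of_subset h]
    simp only [Finset.card_range] at *
    omega
  constructor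
  · rintro ⟨⟨h, hA⟩, hc⟩
    exact ⟨h, (key h).1 hc, hA⟩
  · rintro ⟨h, hc, hA⟩
    exact ⟨⟨h, hA⟩, (key h).2 hc⟩

theorem card_facets_containing {M n : ℕ} {E : Finset (Finset ℕ)} (hE : IsFundamentalSet M n E)
    {Q : Finset ℕ} (hQ : Q ⊆ Finset.range n) :
    ((Finset.range n).powerset.filter fun σ => IsFacet n E σ ∧ Q ⊆ σ).card =
      (E.filter (· ⊆ Finset.range n \ Q)).card := by
  refine Finset.card_bij' (fun σ _ => Finset.range n \ σ) (fun P _ => Finset.range n \ P)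
    ?_ ?_ ?_ ?_
  · intro σ hσ
    simp only [Finset.mem_filter, facet_iff hE] at hσ ⊢
    exact ⟨hσ.2.1.2, Finset.sdiff_subset_sdiff subset_rfl hσ.2.2⟩
  · intro P hP
    simp only [Finset.mem_filter, facet_iff hE, Finset.mem_powerset] at hP ⊢
    refine ⟨Finset.sdiff_subset, ⟨Finset.sdiff_subset, ?_⟩, fun x hx =>
      Finset.mem_sdiff.2 ⟨hQ hx, fun hxP => (Finset.mem_sdiff.1 (hP.2 hxP)).2 hx⟩⟩
    rw [Finset.sdiff_sdiff_eq_self (hE.2 P hP.1).1]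
    exact hP.1
  · intro σ hσ
    simp only [Finset.mem_filter, Finset.mem_powerset] at hσ
    exact Finset.sdiff_sdiff_eq_self hσ.1
  · intro P hP
    exact Finset.sdiff_sdiff_eq_self (hE.2 P (Finset.mem_filter.1 hP).1).1

theorem ridges_iff {M n : ℕ} {E : Finset (Finset ℕ)} (hE : IsFundamentalSet M n E)
    (hMn : M < n) :
    (∀ Q, IsRidge M n E Q →
      ((Finset.range n).powerset.filter fun σ => IsFacet n E σ ∧ Q ⊆ σ).card = 2) ↔
    TwoMembers M n E := by
  constructor
  · intro h R hR hc hP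
    have h1 := h (Finset.range n \ R) ((ridge_iff hMn _).2
      ⟨Finset.sdiff_subset, by rwa [Finset.sdiff_sdiff_eq_self hR],
        by rwa [Finset.sdiff_sdiff_eq_self hR]⟩)
    rwa [card_facets_containing hE Finset.sdiff_subset, Finset.sdiff_sdiff_eq_self hR] at h1
  · intro h Q hQ
    obtain ⟨hQn, hc, hP⟩ := (ridge_iff hMn _).1 hQ
    rw [card_facets_containing hE hQn]
    exact h _ Finset.sdiff_subset hc hP

/-! ### SEU as the two-member condition -/

/-- A subset of `P ∪ {k}` other than `P` itself, but of the same cardinality, arises from `P`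
by a substitution `(P \ {k'}) ∪ {k}`. -/
theorem exists_substitute {P B : Finset ℕ} {k : ℕ} (hB : B ⊆ insert k P)
    (hc : B.card = P.card) (hne : B ≠ P) : ∃ k' ∈ P, B = (P \ {k'}) ∪ {k} := by
  have hPB : ¬ P ⊆ B := fun h => hne (Finset.eq_of_subset_of_card_le h hc.le).symm
  obtain ⟨k', hk', hk'B⟩ := Finset.not_subset.1 hPB
  refine ⟨k', hk', Finset.eq_of_subset_of_card_le (fun x hx => ?_) ?_⟩
  · have := hB hx
    have : x ≠ k' := fun h => hk'B (h ▸ hx)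
    simp only [Finset.mem_insert, Finset.mem_union, Finset.mem_sdiff,
      Finset.mem_singleton] at *
    tauto
  · refine (Finset.card_union_le _ _).trans ?_
    rw [Finset.card_sdiff_of_subset (by simpa using hk'), Finset.card_singleton,
      Finset.card_singleton, hc]
    have := Finset.card_pos.2 ⟨k', hk'⟩
    omega

theorem seu_iff {M n : ℕ} {E : Finset (Finset ℕ)}
    (hE : ∀ P ∈ E, P ⊆ Finset.range n ∧ P.card = M) : SEU n E ↔ TwoMembers M n E := by
  constructor
  · rintro h R hR hc ⟨P, hP, hPR⟩
    obtain ⟨k, hk⟩ : (R \ P).Nonempty := by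
      rw [← Finset.card_pos, Finset.card_sdiff_of_subset hPR, hc, (hE P hP).2]
      omega
    obtain ⟨hkR, hkP⟩ := Finset.mem_sdiff.1 hk
    have hRP : R = insert k P := by
      refine (Finset.eq_of_subset_of_card_le (Finset.insert_subset hkR hPR) ?_).symm
      rw [Finset.card_insert_of_notMem hkP, hc, (hE P hP).2]
    obtain ⟨k', ⟨hk', hB⟩, huniq⟩ := h P hP k (hR hkR)
    refine Finset.card_eq_two.2 ⟨P, (P \ {k'}) ∪ {k}, fun heq => hkP ?_, ?_⟩
    · rw [heq]; simp
    · ext B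
      simp only [Finset.mem_filter, Finset.mem_insert, Finset.mem_singleton]
      constructor
      · rintro ⟨hBE, hBR⟩
        by_cases hBP : B = P
        · exact Or.inl hBP
        · obtain ⟨l, hl, rfl⟩ := exists_substitute (hRP ▸ hBR)
            ((hE B hBE).2.trans (hE P hP).2.symm) hBP
          rw [huniq l ⟨hl, hBE⟩]
          exact Or.inr rfl
      · rintro (rfl | rfl)
        · exact ⟨hP, hPR⟩
        · exact ⟨hB, Finset.union_subset (Finset.sdiff_subset.trans hPR) (by simpa using hkR)⟩
  · intro h P hP k hkn
    by_cases hk : k ∈ P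
    · refine ⟨k, ⟨hk, ?_⟩, ?_⟩
      · rwa [Finset.sdiff_union_of_subset (by simpa using hk)]
      · rintro l ⟨hl, hlE⟩
        by_contra hlk
        -- Removing `l ≠ k` and adding `k ∈ P` leaves only `M - 1` elements.
        have hsub : (P \ {l}) ∪ {k} ⊆ P :=
          Finset.union_subset Finset.sdiff_subset (by simpa using hk)
        have heq := Finset.eq_of_subset_of_card_le hsub (by rw [(hE P hP).2, (hE _ hlE).2])
        rw [← heq] at hl
        simp [hlk] at hl
    · have hkP : (insert k P).card = M + 1 := by
        rw [Finset.card_insert_of_notMem hk, (hE P hP).2]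
      have h2 := h (insert k P) (Finset.insert_subset hkn (hE P hP).1) hkP
        ⟨P, hP, Finset.subset_insert _ _⟩
      have hPf : P ∈ E.filter (· ⊆ insert k P) :=
        Finset.mem_filter.2 ⟨hP, Finset.subset_insert _ _⟩
      have h1 : ((E.filter (· ⊆ insert k P)).erase P).card = 1 := by
        rw [Finset.card_erase_of_mem hPf, h2]
      obtain ⟨B, hB⟩ := Finset.card_eq_one.1 h1
      have hBm : ∀ C, C ≠ P ∧ C ∈ E ∧ C ⊆ insert k P ↔ C = B := fun C => by
        rw [← Finset.mem_singleton, ← hB, Finset.mem_erase, Finset.mem_filter]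
      obtain ⟨hBP, hBE, hBs⟩ := (hBm B).2 rfl
      obtain ⟨k', hk', rfl⟩ := exists_substitute hBs
        ((hE B hBE).2.trans (hE P hP).2.symm) hBP
      refine ⟨k', ⟨hk', hBE⟩, ?_⟩
      rintro l ⟨hl, hlE⟩
      have heq : (P \ {l}) ∪ {k} = (P \ {k'}) ∪ {k} := by
        refine (hBm _).1 ⟨fun h => hk (by rw [← h]; simp), hlE, ?_⟩
        exact Finset.union_subset (Finset.sdiff_subset.trans (Finset.subset_insert _ _))
          (by simp)
      by_contra hlk
      have hl1 : l ∈ (P \ {k'}) ∪ {k} := by simp [hl, hlk]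
      rw [← heq] at hl1
      have : l ≠ k := fun h => hk (h ▸ hl)
      simp [this] at hl1

/-! ### SEU subfamilies and connected components -/

/-- An SEU subfamily is closed under adjacency: both families have exactly two members inside
`A ∪ B`, hence the same ones. -/
theorem mem_of_adjacent {M n : ℕ} {E E' : Finset (Finset ℕ)}
    (hE : ∀ P ∈ E, P ⊆ Finset.range n ∧ P.card = M) (h : TwoMembers M n E)
    (h' : TwoMembers M n E') (hsub : E' ⊆ E) {A B : Finset ℕ} (hA : A ∈ E')
    (hAB : Adjacent M E A B) : B ∈ E' := by
  obtain ⟨hAE, hBE, hc⟩ := hAB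
  have hR : A ∪ B ⊆ Finset.range n := Finset.union_subset (hE A hAE).1 (hE B hBE).1
  have h1 := h _ hR hc ⟨A, hAE, Finset.subset_union_left⟩
  have h2 := h' _ hR hc ⟨A, hA, Finset.subset_union_left⟩
  have heq := Finset.eq_of_subset_of_card_le
    (Finset.filter_subset_filter (· ⊆ A ∪ B) hsub) (by rw [h1, h2])
  have hB : B ∈ E.filter (· ⊆ A ∪ B) := Finset.mem_filter.2 ⟨hBE, Finset.subset_union_right⟩
  rw [← heq] at hB
  exact (Finset.mem_filter.1 hB).1

/-- A connected component of the adjacency graph inherits SEU, because two members of `E` inside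
the same set of cardinality `M + 1` are equal or adjacent. -/
theorem seu_component {M n : ℕ} {E : Finset (Finset ℕ)}
    (hE : ∀ P ∈ E, P ⊆ Finset.range n ∧ P.card = M) (h : TwoMembers M n E) (P₀ : Finset ℕ) :
    TwoMembers M n (E.filter fun P => Relation.ReflTransGen (Adjacent M E) P₀ P) := by
  rintro R hR hc ⟨P, hP, hPR⟩
  obtain ⟨hPE, hP0⟩ := Finset.mem_filter.1 hP
  rw [← h R hR hc ⟨P, hPE, hPR⟩]
  congr 1
  ext B
  simp only [Finset.mem_filter]
  refine ⟨fun hB => ⟨hB.1.1, hB.2⟩, fun ⟨hBE, hBR⟩ => ⟨⟨hBE, ?_⟩, hBR⟩⟩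
  by_cases hBP : B = P
  · rwa [hBP]
  · refine hP0.tail ⟨hPE, hBE, le_antisymm ?_ ?_⟩
    · rw [← hc]
      exact Finset.card_le_card (Finset.union_subset hPR hBR)
    · by_contra hlt
      have hle : (P ∪ B).card ≤ M := by omega
      have h1 := Finset.eq_of_subset_of_card_le (Finset.subset_union_left (s₁ := P) (s₂ := B))
        (by rw [(hE P hPE).2]; exact hle)
      have h2 := Finset.eq_of_subset_of_card_le (Finset.subset_union_right (s₁ := P) (s₂ := B))
        (by rw [(hE B hBE).2]; exact hle)
      exact hBP (h2.trans h1.symm)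

/-! ### Chains of facets and paths of members -/

theorem adjacent_iff_ridge {M n : ℕ} {E : Finset (Finset ℕ)} (hE : IsFundamentalSet M n E)
    (hMn : M < n) {σ τ : Finset ℕ} (hσ : IsFacet n E σ) (hτ : IsFacet n E τ) :
    IsRidge M n E (σ ∩ τ) ↔ Adjacent M E (Finset.range n \ σ) (Finset.range n \ τ) := by
  rw [facet_iff hE] at hσ hτ
  rw [ridge_iff hMn, Adjacent, Finset.sdiff_inter_distrib_right]
  exact ⟨fun h => ⟨hσ.2, hτ.2, h.2.1⟩, fun h => ⟨Finset.inter_subset_left.trans hσ.1, h.2.2,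
    _, hσ.2, Finset.subset_union_left⟩⟩

/-- A path in the adjacency graph gives a chain of facets between the complements. -/
theorem exists_chain {M n : ℕ} {E : Finset (Finset ℕ)} (hE : IsFundamentalSet M n E)
    (hMn : M < n) {P Q : Finset ℕ} (hQ : Q ∈ E)
    (h : Relation.ReflTransGen (Adjacent M E) P Q) :
    ∃ r : ℕ, ∃ c : Fin (r + 1) → Finset ℕ,
      c 0 = Finset.range n \ P ∧ c (Fin.last r) = Finset.range n \ Q ∧
      (∀ i, IsFacet n E (c i)) ∧
      ∀ i : Fin r, IsRidge M n E (c i.castSucc ∩ c i.succ) := by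
  have hfacet : ∀ P ∈ E, IsFacet n E (Finset.range n \ P) := fun P hP =>
    (facet_iff hE _).2 ⟨Finset.sdiff_subset,
      by rwa [Finset.sdiff_sdiff_eq_self (hE.2 P hP).1]⟩
  induction h using Relation.ReflTransGen.head_induction_on with
  | refl => exact ⟨0, fun _ => Finset.range n \ Q, rfl, rfl, fun _ => hfacet Q hQ,
      fun i => i.elim0⟩
  | @head A B hab _ ih =>
    obtain ⟨r, c, h0, hl, hf, hr⟩ := ih
    refine ⟨r + 1, Fin.cons (Finset.range n \ A) c, rfl, ?_, ?_, ?_⟩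
    · rw [← Fin.succ_last, Fin.cons_succ, hl]
    · intro i
      refine Fin.cases ?_ (fun i => ?_) i
      · exact hfacet A hab.1
      · exact hf i
    · intro i
      refine Fin.cases ?_ (fun i => ?_) i
      · rw [Fin.castSucc_zero, Fin.cons_zero, Fin.cons_succ, h0,
          adjacent_iff_ridge hE hMn (hfacet A hab.1) (hfacet B hab.2.1),
          Finset.sdiff_sdiff_eq_self (hE.2 A hab.1).1,
          Finset.sdiff_sdiff_eq_self (hE.2 B hab.2.1).1]
        exact hab
      · rw [← Fin.succ_castSucc, Fin.cons_succ, Fin.cons_succ]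
        exact hr i

/-- Let `E` be a fundamental set of type `(M, n)` with `n > M`, and let `P`
be its associated complex.  Then `P` is a pseudo-manifold if and only if `E` is minimal
for the SEU property. -/
theorem statement7 (M n : ℕ) (E : Finset (Finset ℕ))
    (hE : IsFundamentalSet M n E) (hMn : M < n) :
    IsPseudoManifold M n E ↔ MinimalSEU n E := by
  rw [IsPseudoManifold, ridges_iff hE hMn, MinimalSEU, seu_iff hE.2]
  refine and_congr_right fun h2 => ⟨fun hconn E' hE' hne hseu => ?_, fun hmin σ τ hσ hτ => ?_⟩
  · have h2' := (seu_iff fun P hP => hE.2 P (hE'.1 hP)).1 hseu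
    obtain ⟨P, hP⟩ := hne
    refine hE'.2 fun Q hQ => ?_
    have hPn := (hE.2 P (hE'.1 hP)).1
    have hQn := (hE.2 Q hQ).1
    obtain ⟨r, c, h0, hl, hf, hr⟩ := hconn (Finset.range n \ P) (Finset.range n \ Q)
      ((facet_iff hE _).2 ⟨Finset.sdiff_subset,
        by rw [Finset.sdiff_sdiff_eq_self hPn]; exact hE'.1 hP⟩)
      ((facet_iff hE _).2 ⟨Finset.sdiff_subset, by rwa [Finset.sdiff_sdiff_eq_self hQn]⟩)
    -- Membership in `E'` propagates along the chain from `P` to `Q`.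
    have hall : ∀ i, Finset.range n \ c i ∈ E' := by
      intro i
      induction i using Fin.induction with
      | zero => rwa [h0, Finset.sdiff_sdiff_eq_self hPn]
      | succ i ih =>
        exact mem_of_adjacent hE.2 h2 h2' hE'.1 ih
          ((adjacent_iff_ridge hE hMn (hf _) (hf _)).1 (hr i))
    have hlast := hall (Fin.last r)
    rwa [hl, Finset.sdiff_sdiff_eq_self hQn] at hlast
  · obtain ⟨hσn, hσE⟩ := (facet_iff hE σ).1 hσ
    obtain ⟨hτn, hτE⟩ := (facet_iff hE τ).1 hτ
    have hreach : Relation.ReflTransGen (Adjacent M E)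
        (Finset.range n \ σ) (Finset.range n \ τ) := by
      by_contra hnot
      -- Otherwise the component of the complement of `σ` is a proper SEU subfamily.
      refine hmin (E.filter fun P =>
          Relation.ReflTransGen (Adjacent M E) (Finset.range n \ σ) P)
        (Finset.filter_ssubset.2 ⟨_, hτE, hnot⟩)
        ⟨_, Finset.mem_filter.2 ⟨hσE, Relation.ReflTransGen.refl⟩⟩ ?_
      exact (seu_iff fun P hP => hE.2 P (Finset.mem_filter.1 hP).1).2
        (seu_component hE.2 h2 _)
    have hchain := exists_chain hE hMn hτE hreach
    rwa [Finset.sdiff_sdiff_eq_self hσn, Finset.sdiff_sdiff_eq_self hτn] at hchain
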